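/- Assume in addition that Im u(0) = 0. Then for all sufficiently small x > 0 one has ξ(x) ∉ (−∞,0], and lim_{x→0⁺} [ e^{−u(0)π/β} · ( β·ξ(x)/(2π) )^{−2π/β} − 1/x ] = u′(0)/(2(b+2)), where the complex power w^{−2π/β} is principal and u′(0) is the complex derivative of u at 0. Equivalently, 1/x = e^{−u(0)π/β}·(β·ξ(x)/(2π))^{−2π/β} − u′(0)/(2(b+2)) + o(1) as x → 0⁺. -/

import Mathlib

open Complex Real Set Filter

lemma aux_K (q : ℂ → ℂ) (R : ℝ) (hR : 0 < R) (hq : ContinuousOn q (Metric.ball 0 R))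
    (b : ℝ) (hb : -1 < b) :
    Tendsto (fun x : ℝ => ∫ t in (0:ℝ)..1, ((t ^ (b+1) : ℝ) : ℂ) * q ((t:ℂ) * (x:ℂ)))
      (nhdsWithin (0:ℝ) (Set.Ioi 0)) (nhds (q 0 / ((b:ℂ) + 2))) := by
  have hI : (∫ t in (0:ℝ)..1, ((t ^ (b+1) : ℝ) : ℂ) * q 0) = q 0 / ((b:ℂ) + 2) := by
    rw [intervalIntegral.integral_mul_const, intervalIntegral.integral_ofReal,
      integral_rpow (Or.inl (by linarith))]
    rw [Real.one_rpow, Real.zero_rpow (by linarith)]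
    push_cast
    have : (b:ℂ) + 2 ≠ 0 := by
      have : b + 2 ≠ 0 := by linarith
      exact_mod_cast this
    rw [show (b:ℂ) + 1 + 1 = b + 2 by ring]
    field_simp
    ring
  rw [← hI]
  have hq0 : ContinuousAt q 0 := hq.continuousAt (Metric.ball_mem_nhds _ hR)
  obtain ⟨δ, hδ, hδq⟩ := Metric.continuousAt_iff.1 hq0 1 one_pos
  have hev : ∀ᶠ x in nhdsWithin (0:ℝ) (Set.Ioi 0), 0 < x ∧ x < min δ R := by
    filter_upwards [self_mem_nhdsWithin,
      mem_nhdsWithin_of_mem_nhds (Iio_mem_nhds (lt_min hδ hR))] with x h1 h2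
    exact ⟨h1, h2⟩
  have hn : ∀ x t : ℝ, 0 < x → t ∈ Set.Ioc (0:ℝ) 1 → ‖(t:ℂ) * (x:ℂ)‖ ≤ x := by
    intro x t hx ht
    rw [norm_mul, Complex.norm_real, Complex.norm_real, Real.norm_of_nonneg ht.1.le,
      Real.norm_of_nonneg hx.le]
    nlinarith [ht.2]
  apply intervalIntegral.tendsto_integral_filter_of_dominated_convergence (fun _ => ‖q 0‖ + 1)
  · filter_upwards [hev] with x hx
    rw [Set.uIoc_of_le zero_le_one]
    apply ContinuousOn.aestronglyMeasurable _ measurableSet_Ioc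
    apply ContinuousOn.mul
    · apply Continuous.continuousOn
      exact Complex.continuous_ofReal.comp (Real.continuous_rpow_const (by linarith))
    · apply hq.comp (by fun_prop)
      intro t ht
      rw [mem_ball_zero_iff]
      exact (hn x t hx.1 ht).trans_lt (hx.2.trans_le (min_le_right _ _))
  · filter_upwards [hev] with x hx
    refine Filter.Eventually.of_forall fun t ht => ?_
    rw [Set.uIoc_of_le zero_le_one] at ht
    have h1 : ‖q ((t:ℂ) * x)‖ ≤ ‖q 0‖ + 1 := by
      have := hδq (x := (t:ℂ) * x) (by
        rw [dist_zero_right]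
        exact (hn x t hx.1 ht).trans_lt (hx.2.trans_le (min_le_left _ _)))
      rw [dist_eq_norm] at this
      have h3 := norm_sub_norm_le (q ((t:ℂ) * x)) (q 0)
      linarith
    rw [norm_mul, Complex.norm_real, Real.norm_of_nonneg (Real.rpow_nonneg ht.1.le _)]
    have h2 : t ^ (b+1) ≤ 1 := Real.rpow_le_one ht.1.le ht.2 (by linarith)
    nlinarith [norm_nonneg (q ((t:ℂ) * x))]
  · simp
  · refine Filter.Eventually.of_forall fun t ht => ?_
    apply Tendsto.const_mul
    apply hq0.tendsto.comp
    have : Tendsto (fun x : ℝ => (t:ℂ) * (x:ℂ)) (nhds 0) (nhds ((t:ℂ) * ((0:ℝ):ℂ))) :=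
      Continuous.tendsto (by fun_prop) 0
    rw [Complex.ofReal_zero, mul_zero] at this
    exact this.mono_left nhdsWithin_le_nhds

lemma aux_pow (K : ℝ → ℂ) (k : ℂ) (hK : Tendsto K (nhdsWithin (0:ℝ) (Set.Ioi 0)) (nhds k)) (c : ℂ) :
    Tendsto (fun x : ℝ => ((1 + (x:ℂ) * K x) ^ c - 1) / (x:ℂ))
      (nhdsWithin (0:ℝ) (Set.Ioi 0)) (nhds (c * k)) := by
  have h1 : HasDerivWithinAt (fun x : ℝ => 1 + (x:ℂ) * K x) k (Set.Ioi 0) 0 := by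
    rw [hasDerivWithinAt_iff_tendsto_slope' (by simp)]
    refine hK.congr' ?_
    filter_upwards [self_mem_nhdsWithin] with x hx
    have : (x:ℂ) ≠ 0 := by exact_mod_cast (ne_of_gt hx)
    simp [slope_def_module, this]
  have h2 : HasDerivAt (fun z : ℂ => z ^ c) (c * (1:ℂ) ^ (c - 1) * 1) (1 + ((0:ℝ):ℂ) * K 0) := by
    have : (1 + ((0:ℝ):ℂ) * K 0) = 1 := by simp
    rw [this]
    exact (hasDerivAt_id (1:ℂ)).cpow_const (by simp)
  have h3 := h2.comp_hasDerivWithinAt (0:ℝ) h1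
  rw [hasDerivWithinAt_iff_tendsto_slope' (by simp)] at h3
  simp only [one_cpow, mul_one] at h3
  refine h3.congr' ?_
  filter_upwards [self_mem_nhdsWithin] with x hx
  simp [slope_def_module, div_eq_inv_mul]

/-- Asymptotics of the inverse of the distinguished conical coordinate along the
positive real axis: assuming `Im u(0) = 0`, one has `ξ(x) ∉ (-∞,0]` for small `x > 0` and
`1/x = e^{-u(0)π/β} (β ξ(x)/(2π))^{-2π/β} - u'(0)/(2(b+2)) + o(1)` as `x → 0⁺`. -/
theorem conical_coordinate_inverse_expansion
    (R : ℝ) (hR : 0 < R) (u : ℂ → ℂ) (hu : DifferentiableOn ℂ u (Metric.ball 0 R))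
    (b : ℝ) (hb : -1 < b) (β : ℝ) (hβ : β = 2 * π * (1 + b))
    (hIm : (u 0).im = 0)
    (ξ : ℝ → ℂ)
    (hξ : ∀ x : ℝ, ξ x = ∫ t in (0:ℝ)..1,
      ((t : ℂ) * (x : ℂ)) ^ (b : ℂ) * Complex.exp (-u ((t : ℂ) * (x : ℂ)) / 2) * (x : ℂ)) :
    (∀ᶠ x in nhdsWithin (0:ℝ) (Set.Ioi 0), ξ x ∈ Complex.slitPlane) ∧
    Tendsto
      (fun x : ℝ =>
        Complex.exp (-u 0 * (π : ℂ) / (β : ℂ)) *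
          ((β : ℂ) * ξ x / (2 * (π : ℂ))) ^ ((-(2 * π / β) : ℝ) : ℂ)
          - 1 / (x : ℂ))
      (nhdsWithin (0:ℝ) (Set.Ioi 0))
      (nhds (deriv u 0 / (2 * ((b : ℂ) + 2)))) := by
  have hb1 : (0:ℝ) < b + 1 := by linarith
  have hb1c : (b:ℂ) + 1 ≠ 0 := by exact_mod_cast hb1.ne'
  have hb2c : (b:ℂ) + 2 ≠ 0 := by
    have : b + 2 ≠ 0 := by linarith
    exact_mod_cast this
  have hu0 : u 0 = ((u 0).re : ℂ) := by
    apply Complex.ext <;> simp [hIm]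
  set a : ℝ := (u 0).re with ha
  have hball : Metric.ball (0:ℂ) R ∈ nhds (0:ℂ) := Metric.ball_mem_nhds _ hR
  set h : ℂ → ℂ := fun w => Complex.exp (-u w / 2) with hh
  have hhd : DifferentiableOn ℂ h (Metric.ball 0 R) := by
    intro w hw
    exact ((hu w hw).neg.div_const 2).cexp
  have hh0 : h 0 = ((Real.exp (-a/2) : ℝ) : ℂ) := by
    simp only [hh]; rw [hu0]; push_cast; rfl
  have hderiv : deriv h 0 = h 0 * (-deriv u 0 / 2) :=
    (((hu.differentiableAt hball).hasDerivAt.neg.div_const 2).cexp).deriv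
  set q := dslope h 0 with hqdef
  have hqc : ContinuousOn q (Metric.ball 0 R) :=
    (continuousOn_dslope hball).2 ⟨hhd.continuousOn, hhd.differentiableAt hball⟩
  have hq0 : q 0 = h 0 * (-deriv u 0 / 2) := by rw [hqdef, dslope_same, hderiv]
  have hq : ∀ w, h w = h 0 + w * q w := by
    intro w
    have := sub_smul_dslope h 0 w
    simp only [sub_zero, smul_eq_mul] at this
    rw [hqdef, this]; ring
  have hK := aux_K q R hR hqc b hb
  set K : ℝ → ℂ := fun x => ∫ t in (0:ℝ)..1, ((t ^ (b+1) : ℝ) : ℂ) * q ((t:ℂ) * (x:ℂ)) with hKdef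
  have hE : (h 0) ≠ 0 := Complex.exp_ne_zero _
  set L : ℝ → ℂ := fun x => ((b:ℂ) + 1) / h 0 * K x with hL
  have hLt : Tendsto L (nhdsWithin (0:ℝ) (Set.Ioi 0))
      (nhds (((b:ℂ) + 1) / h 0 * (q 0 / ((b:ℂ) + 2)))) := hK.const_mul _
  -- formula for ξ
  have hform : ∀ᶠ x in nhdsWithin (0:ℝ) (Set.Ioi 0), 0 < x ∧
      ξ x = ((x ^ (b+1) * Real.exp (-a/2) / (b+1) : ℝ) : ℂ) * (1 + (x:ℂ) * L x) := by
    filter_upwards [self_mem_nhdsWithin, mem_nhdsWithin_of_mem_nhds (Iio_mem_nhds hR)] with x hx hxR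
    have hx : 0 < x := hx
    have hxR : x < R := hxR
    refine ⟨hx, ?_⟩
    have hxc : (x:ℂ) ≠ 0 := by exact_mod_cast hx.ne'
    have hint1 : IntervalIntegrable (fun t : ℝ => ((t ^ b : ℝ) : ℂ)) MeasureTheory.volume 0 1 :=
      ⟨(intervalIntegral.intervalIntegrable_rpow' hb).1.ofReal,
        (intervalIntegral.intervalIntegrable_rpow' hb).2.ofReal⟩
    have hint2 : IntervalIntegrable (fun t : ℝ => ((t ^ (b+1) : ℝ) : ℂ) * q ((t:ℂ) * (x:ℂ)))
        MeasureTheory.volume 0 1 := by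
      apply ContinuousOn.intervalIntegrable
      rw [Set.uIcc_of_le zero_le_one]
      apply ContinuousOn.mul
      · apply Continuous.continuousOn
        exact Complex.continuous_ofReal.comp (Real.continuous_rpow_const (by linarith))
      · apply hqc.comp (by fun_prop)
        intro t ht
        rw [mem_ball_zero_iff, norm_mul, Complex.norm_real, Complex.norm_real,
          Real.norm_of_nonneg ht.1, Real.norm_of_nonneg hx.le]
        nlinarith [ht.2]
    have hcongr : ξ x = ∫ t in (0:ℝ)..1, (((x ^ (b+1) : ℝ) : ℂ) * h 0) * ((t ^ b : ℝ) : ℂ)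
        + (((x ^ (b+1) : ℝ) : ℂ) * x) * (((t ^ (b+1) : ℝ) : ℂ) * q ((t:ℂ) * (x:ℂ))) := by
      rw [hξ]
      apply intervalIntegral.integral_congr_ae
      refine Filter.Eventually.of_forall fun t ht => ?_
      rw [Set.uIoc_of_le zero_le_one] at ht
      have e1 : ((t:ℂ) * (x:ℂ)) ^ (b:ℂ) = ((t ^ b : ℝ) : ℂ) * ((x ^ b : ℝ) : ℂ) := by
        rw [← Complex.ofReal_mul, ← Complex.ofReal_cpow (mul_pos ht.1 hx).le,
          Real.mul_rpow ht.1.le hx.le, Complex.ofReal_mul]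
      have e2 : Complex.exp (-u ((t:ℂ) * (x:ℂ)) / 2) = h 0 + ((t:ℂ) * x) * q ((t:ℂ) * x) :=
        hq ((t:ℂ) * x)
      rw [e1, e2, Real.rpow_add_one hx.ne', Real.rpow_add_one ht.1.ne']
      push_cast
      ring
    rw [hcongr, intervalIntegral.integral_add (hint1.const_mul _) (hint2.const_mul _),
      intervalIntegral.integral_const_mul, intervalIntegral.integral_const_mul,
      intervalIntegral.integral_ofReal, integral_rpow (Or.inl hb), Real.one_rpow,
      Real.zero_rpow hb1.ne']
    change _ + _ * K x = _
    simp only [hL]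
    rw [Complex.ofReal_div, Complex.ofReal_div, Complex.ofReal_mul, ← hh0]
    push_cast
    field_simp
    ring
  have hslit : ∀ᶠ x : ℝ in nhdsWithin (0:ℝ) (Set.Ioi 0), 1 + (x:ℂ) * L x ∈ Complex.slitPlane := by
    have : Tendsto (fun x : ℝ => 1 + (x:ℂ) * L x) (nhdsWithin (0:ℝ) (Set.Ioi 0)) (nhds 1) := by
      have h0 : Tendsto (fun x : ℝ => (x:ℂ)) (nhdsWithin (0:ℝ) (Set.Ioi 0)) (nhds ((0:ℝ):ℂ)) :=
        (Complex.continuous_ofReal.tendsto 0).mono_left nhdsWithin_le_nhds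
      simpa using (h0.mul hLt).const_add 1
    exact this.eventually (Complex.isOpen_slitPlane.mem_nhds (by simp))
  constructor
  · filter_upwards [hform, hslit] with x hx hs
    rw [hx.2]
    have hpos : 0 < x ^ (b+1) * Real.exp (-a/2) / (b+1) :=
      div_pos (mul_pos (Real.rpow_pos_of_pos hx.1 _) (Real.exp_pos _)) hb1
    rw [Complex.mem_slitPlane_iff] at hs ⊢
    rw [Complex.re_ofReal_mul, Complex.im_ofReal_mul]
    rcases hs with hs | hs
    · exact Or.inl (mul_pos hpos hs)
    · exact Or.inr (mul_ne_zero hpos.ne' hs)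
  · have hc : -(2 * π / β) = -(1/(b+1)) := by
      rw [hβ, add_comm 1 b]; have := Real.pi_ne_zero; field_simp
    have hlim := aux_pow L _ hLt ((-(2 * π / β) : ℝ) : ℂ)
    have hval : ((-(2 * π / β) : ℝ) : ℂ) * (((b:ℂ) + 1) / h 0 * (q 0 / ((b:ℂ) + 2)))
        = deriv u 0 / (2 * ((b : ℂ) + 2)) := by
      rw [hc, hq0]; push_cast; field_simp
    rw [hval] at hlim
    refine hlim.congr' ?_
    filter_upwards [hform, hslit] with x hx hs
    obtain ⟨hx, hxi⟩ := hx
    have hxc : (x:ℂ) ≠ 0 := by exact_mod_cast hx.ne'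
    have hP : 1 + (x:ℂ) * L x ≠ 0 := Complex.slitPlane_ne_zero hs
    have hr : 0 < x ^ (b+1) * Real.exp (-a/2) :=
      mul_pos (Real.rpow_pos_of_pos hx _) (Real.exp_pos _)
    have e1 : (β:ℂ) * ξ x / (2 * (π:ℂ)) =
        ((x ^ (b+1) * Real.exp (-a/2) : ℝ) : ℂ) * (1 + (x:ℂ) * L x) := by
      have hpi : (π:ℂ) ≠ 0 := by exact_mod_cast Real.pi_ne_zero
      rw [hxi, hβ, Complex.ofReal_div]
      generalize (x ^ (b+1) * Real.exp (-a/2)) = r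
      push_cast
      field_simp
      ring
    have hlogr : Real.log (x ^ (b+1) * Real.exp (-a/2)) = (b+1) * Real.log x - a/2 := by
      rw [Real.log_mul (Real.rpow_pos_of_pos hx _).ne' (Real.exp_pos _).ne', Real.log_rpow hx,
        Real.log_exp]
      ring
    have hpi' := Real.pi_ne_zero
    have e2 : -u 0 * (π:ℂ) / (β:ℂ) = ((-a / (2 * (b+1)) : ℝ) : ℂ) := by
      have : -a * π / β = -a / (2 * (b+1)) := by
        rw [hβ, add_comm 1 b]; field_simp
      rw [hu0, ← this]; push_cast; rfl
    have e3 : Complex.exp (-u 0 * (π : ℂ) / (β : ℂ)) *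
          ((β : ℂ) * ξ x / (2 * (π : ℂ))) ^ ((-(2 * π / β) : ℝ) : ℂ)
        = (x:ℂ)⁻¹ * (1 + (x:ℂ) * L x) ^ ((-(2 * π / β) : ℝ) : ℂ) := by
      rw [e1, e2, Complex.cpow_def_of_ne_zero (mul_ne_zero (by exact_mod_cast hr.ne') hP),
        Complex.log_ofReal_mul hr hP, hlogr, add_mul, Complex.exp_add, ← mul_assoc,
        ← Complex.exp_add, Complex.cpow_def_of_ne_zero hP, ← Complex.ofReal_mul,
        ← Complex.ofReal_add]
      congr 1
      have : -a / (2 * (b+1)) + ((b+1) * Real.log x - a/2) * -(2 * π / β) = - Real.log x := by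
        rw [hc]; field_simp; ring
      rw [this, ← Complex.ofReal_exp, Real.exp_neg, Real.exp_log hx, Complex.ofReal_inv]
    rw [e3]
    field_simp
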